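/- Let f : ℝ² → ℝ be of class C² with D²f(p)(q,q) > 0 for all p, q ∈ ℝ² with q ≠ 0, and let u ∈ C²(ℝ²) solve div[Df(∇u)] = 0 on ℝ². Then there is a constant c > 0, independent of R and η, such that for every R > 0 and every η ∈ C₀^∞(B_{2R}) with 0 ≤ η ≤ 1 one has: ∫_{B_{2R}} η² · D²f(∇u)(∇∂₁u, ∇∂₁u) · Γ₁^{−1/2} dx ≤ c · ∫_{B_{2R}} D²f(∇u)(∇η, ∇η) · Γ₁^{1/2} · ln²(e²−1+Γ₁) dx, where Γ₁ := 1 + |∂₁u|². -/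

import Mathlib

open Real MeasureTheory Metric
open scoped ENNReal

noncomputable section

/-- `ℝ²` with its Euclidean structure. -/
abbrev E2 : Type := EuclideanSpace ℝ (Fin 2)

/-- The `i`-th standard basis vector of `ℝ²`. -/
def ee (i : Fin 2) : E2 := EuclideanSpace.single i 1

/-- The Hessian bilinear form `D²f(p)(q,q)`. -/
def Hess (f : E2 → ℝ) (p q : E2) : ℝ := iteratedFDeriv ℝ 2 f p ![q, q]

/-- The partial derivative `∂ᵢu(x)`. -/
def pd (u : E2 → ℝ) (i : Fin 2) (x : E2) : ℝ := fderiv ℝ u x (ee i)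

/-- The equation `div [Df(∇u)] = 0`, i.e. `∑ i, ∂ᵢ[(∂f/∂pᵢ)(∇u(x))] = 0` on `ℝ²`. -/
def solves (f u : E2 → ℝ) : Prop :=
  ∀ x : E2, ∑ i : Fin 2, fderiv ℝ (fun y => fderiv ℝ f (gradient u y) (ee i)) x (ee i) = 0

/-!
Put `w = ∂ᵥu`. Translates of a solution are solutions, so differentiating the weak form of
`div[Df(∇u)] = 0` along `v` shows that `w` solves the linear equation `div(D²f(∇u)∇w) = 0` weakly.
Testing it with `η² g(w)` and applying Young's inequality gives, for every `g` with `g' > 0`,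
`∫ η² D²f(∇u)(∇w,∇w) g'(w) ≤ 4 ∫ D²f(∇u)(∇η,∇η) g(w)² / g'(w)`.
The choice `g = arsinh` has `g'(w) = Γ^(-1/2)` and grows logarithmically, where `Γ = 1 + w²`.
-/

open scoped Gradient

section Gradient

variable {E : Type*} [NormedAddCommGroup E] [InnerProductSpace ℝ E] [CompleteSpace E]

theorem contDiff_gradient {n m : WithTop ℕ∞} {u : E → ℝ} (hu : ContDiff ℝ n u) (hmn : m + 1 ≤ n) :
    ContDiff ℝ m (∇ u) :=
  (InnerProductSpace.toDual ℝ E).symm.contDiff.comp (hu.fderiv_right hmn)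

theorem continuous_gradient {u : E → ℝ} (hu : ContDiff ℝ 1 u) : Continuous (∇ u) :=
  (contDiff_gradient (m := 0) hu (by norm_num)).continuous

theorem gradient_of_notMem_tsupport {η : E → ℝ} {x : E} (hx : x ∉ tsupport η) : ∇ η x = 0 := by
  simp [gradient, fderiv_of_notMem_tsupport ℝ hx]

theorem hasCompactSupport_gradient {η : E → ℝ} (hη : HasCompactSupport η) :
    HasCompactSupport (∇ η) :=
  .intro hη.isCompact fun _ => gradient_of_notMem_tsupport

theorem sum_fderiv_smul_eq_gradient {ι : Type*} [Fintype ι] (b : OrthonormalBasis ι ℝ E)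
    (u : E → ℝ) (x : E) : ∑ i, fderiv ℝ u x (b i) • b i = ∇ u x := by
  simpa only [inner_gradient_right, conj_trivial] using b.sum_repr' (∇ u x)

theorem fderiv_gradient_apply {u : E → ℝ} {x : E} (hu : ContDiffAt ℝ 2 u x) (v : E) :
    fderiv ℝ (∇ u) x v = ∇ (fderiv ℝ u · v) x := by
  have hdiff : DifferentiableAt ℝ (fderiv ℝ u) x :=
    (hu.fderiv_right (m := 1) (by norm_num)).differentiableAt one_ne_zero
  have hsymm : IsSymmSndFDerivAt ℝ u x := hu.isSymmSndFDerivAt (by simp)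
  have hgrad : fderiv ℝ (∇ u) x v =
      (InnerProductSpace.toDual ℝ E).symm (fderiv ℝ (fderiv ℝ u) x v) :=
    congrArg (· v) ((InnerProductSpace.toDual ℝ E).symm.comp_fderiv (f := fderiv ℝ u))
  refine ext_inner_right ℝ fun w => ?_
  rw [hgrad, InnerProductSpace.toDual_symm_apply, inner_gradient_left,
    fderiv_clm_apply hdiff (differentiableAt_const v)]
  simpa using hsymm v w

theorem gradient_sq_mul_comp {η w : E → ℝ} {g : ℝ → ℝ} {x : E} (hη : DifferentiableAt ℝ η x)
    (hw : DifferentiableAt ℝ w x) (hg : DifferentiableAt ℝ g (w x)) :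
    ∇ (fun y => η y ^ 2 * g (w y)) x =
      (η x ^ 2 * deriv g (w x)) • ∇ w x + (2 * η x * g (w x)) • ∇ η x := by
  have hφ := ((hη.hasFDerivAt.pow 2).mul (hg.hasDerivAt.comp_hasFDerivAt x hw.hasFDerivAt)).fderiv
  refine ext_inner_right ℝ fun v => ?_
  rw [inner_add_left, inner_smul_left, inner_smul_left]
  simp only [inner_gradient_left]
  refine (congrArg (· v) hφ).trans ?_
  simp only [Function.comp_apply, Nat.add_one_sub_one, pow_one, nsmul_eq_mul, Nat.cast_ofNat,
    add_apply, smul_apply, smul_eq_mul, ringHom_apply]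
  ring

end Gradient

section WeakForm

variable {E : Type*} [NormedAddCommGroup E] [MeasurableSpace E] [BorelSpace E] {μ : Measure E}

theorem hasDerivAt_integral_translate_apply [NormedSpace ℝ E] [IsFiniteMeasureOnCompacts μ]
    {F G : Type*} [NormedAddCommGroup F] [NormedSpace ℝ F] [NormedAddCommGroup G] [NormedSpace ℝ G]
    {A : E → F →L[ℝ] G} {ψ : E → F} (hA : ContDiff ℝ 1 A) (hψ : Continuous ψ)
    (hψc : HasCompactSupport ψ) (v : E) :
    HasDerivAt (fun h : ℝ => ∫ x, A (x + h • v) (ψ x) ∂μ) (∫ x, fderiv ℝ A x v (ψ x) ∂μ) 0 := by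
  have hA' : Continuous (fderiv ℝ A) := hA.continuous_fderiv one_ne_zero
  have hcont : Continuous fun z : E × ℝ => fderiv ℝ A (z.1 + z.2 • v) v :=
    (hA'.comp (by fun_prop)).clm_apply continuous_const
  obtain ⟨C, hC⟩ := (hψc.isCompact.prod
    (isCompact_closedBall (0 : ℝ) 1)).exists_bound_of_continuousOn hcont.continuousOn
  have hint {L : E → F →L[ℝ] G} (hL : Continuous L) : Integrable (fun x => L x (ψ x)) μ :=
    (hL.clm_apply hψ).integrable_of_hasCompactSupport <|
      .intro hψc.isCompact fun x hx => by simp [image_eq_zero_of_notMem_tsupport hx]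
  have hbound (x : E) (h : ℝ) (hh : h ∈ closedBall 0 1) :
      ‖fderiv ℝ A (x + h • v) v (ψ x)‖ ≤ C * ‖ψ x‖ := by
    by_cases hx : x ∈ tsupport ψ
    · exact ContinuousLinearMap.le_of_opNorm_le _ (hC (x, h) ⟨hx, hh⟩) _
    · simp [image_eq_zero_of_notMem_tsupport hx]
  have hderiv (x : E) (h : ℝ) :
      HasDerivAt (fun t : ℝ => A (x + t • v) (ψ x)) (fderiv ℝ A (x + h • v) v (ψ x)) h := by
    have hline : HasDerivAt (fun t : ℝ => x + t • v) v h := by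
      simpa using ((hasDerivAt_id h).smul_const v).const_add x
    simpa using ((hA.differentiable one_ne_zero _).hasFDerivAt.comp_hasDerivAt h hline).clm_apply
      (hasDerivAt_const h (ψ x))
  simpa using (hasDerivAt_integral_of_dominated_loc_of_deriv_le
    (F' := fun h x => fderiv ℝ A (x + h • v) v (ψ x)) (closedBall_mem_nhds (0 : ℝ) one_pos)
    (.of_forall fun h => (hint (by fun_prop)).aestronglyMeasurable) (hint (by fun_prop))
    (hint (by fun_prop)).aestronglyMeasurable (.of_forall hbound)
    ((hψ.integrable_of_hasCompactSupport hψc).norm.const_mul C)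
    (.of_forall fun x h _ => hderiv x h)).2

variable [InnerProductSpace ℝ E] {ι : Type*} [Fintype ι] (b : OrthonormalBasis ι ℝ E)

/-- The divergence `∑ i, ∂ᵢAᵢ` of a field `A` of covectors, with `Aᵢ` and `∂ᵢ` taken along the
orthonormal basis `b`; its value does not depend on `b`. -/
def divergence (A : E → E →L[ℝ] ℝ) (x : E) : ℝ :=
  ∑ i, fderiv ℝ (fun y => A y (b i)) x (b i)

variable [CompleteSpace E] [μ.IsAddHaarMeasure]

theorem integral_apply_gradient_eq_neg_integral_divergence_mul {A : E → E →L[ℝ] ℝ} {φ : E → ℝ}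
    (hA : ContDiff ℝ 1 A) (hφ : ContDiff ℝ 1 φ) (hφc : HasCompactSupport φ) :
    ∫ x, A x (∇ φ x) ∂μ = -∫ x, divergence b A x * φ x ∂μ := by
  have : FiniteDimensional ℝ E := b.toBasis.finiteDimensional_of_finite
  have hφ' : Continuous (fderiv ℝ φ) := hφ.continuous_fderiv one_ne_zero
  have hAi (i : ι) : ContDiff ℝ 1 fun y => A y (b i) := hA.clm_apply contDiff_const
  have hAi' (i : ι) : Continuous (fderiv ℝ fun y => A y (b i)) :=
    (hAi i).continuous_fderiv one_ne_zero
  have hintL (i : ι) : Integrable (fun x => A x (b i) * fderiv ℝ φ x (b i)) μ :=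
    ((hAi i).continuous.mul (hφ'.clm_apply continuous_const)).integrable_of_hasCompactSupport
      (hφc.fderiv_apply ℝ (b i)).mul_left
  have hintR (i : ι) : Integrable (fun x => fderiv ℝ (fun y => A y (b i)) x (b i) * φ x) μ :=
    (((hAi' i).clm_apply continuous_const).mul hφ.continuous).integrable_of_hasCompactSupport
      hφc.mul_left
  calc ∫ x, A x (∇ φ x) ∂μ = ∫ x, ∑ i, A x (b i) * fderiv ℝ φ x (b i) ∂μ := by
        simp only [← sum_fderiv_smul_eq_gradient b φ, map_sum, map_smul, smul_eq_mul, mul_comm]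
    _ = ∑ i, ∫ x, A x (b i) * fderiv ℝ φ x (b i) ∂μ := integral_finsetSum _ fun i _ => hintL i
    _ = ∑ i, -∫ x, fderiv ℝ (fun y => A y (b i)) x (b i) * φ x ∂μ :=
        Finset.sum_congr rfl fun i _ => integral_mul_fderiv_eq_neg_fderiv_mul_of_integrable
          (hintR i) (hintL i)
          (((hAi i).continuous.mul hφ.continuous).integrable_of_hasCompactSupport hφc.mul_left)
          (fun x _ => (hAi i).differentiable one_ne_zero x)
          (fun x _ => hφ.differentiable one_ne_zero x)
    _ = -∫ x, divergence b A x * φ x ∂μ := by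
        simp only [divergence, Finset.sum_mul, Finset.sum_neg_distrib,
          integral_finsetSum _ fun i _ => hintR i]

theorem integral_fderiv_apply_gradient_eq_zero {A : E → E →L[ℝ] ℝ} {φ : E → ℝ}
    (hA : ContDiff ℝ 1 A) (hdiv : ∀ x, divergence b A x = 0) (hφ : ContDiff ℝ 1 φ)
    (hφc : HasCompactSupport φ) (v : E) : ∫ x, fderiv ℝ A x v (∇ φ x) ∂μ = 0 := by
  have hdiv_translate (h : ℝ) (x : E) : divergence b (fun y => A (y + h • v)) x = 0 :=
    Eq.trans (Finset.sum_congr rfl fun i _ => by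
      rw [fderiv_comp_add_right (f := fun y => A y (b i))]) (hdiv (x + h • v))
  have hzero (h : ℝ) : ∫ x, A (x + h • v) (∇ φ x) ∂μ = 0 := by
    rw [integral_apply_gradient_eq_neg_integral_divergence_mul b
      (A := fun y => A (y + h • v)) (by fun_prop) hφ hφc]
    simp [hdiv_translate]
  have hderiv := hasDerivAt_integral_translate_apply (μ := μ) hA (continuous_gradient hφ)
    (hasCompactSupport_gradient hφc) v
  simp only [hzero] at hderiv
  exact hderiv.unique (hasDerivAt_const _ _)

end WeakForm

section Caccioppoli

theorem neg_two_mul_apply_le_mul_add_div {V : Type*} [AddCommGroup V] [Module ℝ V]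
    [TopologicalSpace V] (B : V →L[ℝ] V →L[ℝ] ℝ) (hsymm : ∀ p q, B p q = B q p)
    (hnonneg : ∀ p, 0 ≤ B p p) (p q : V) {s : ℝ} (hs : 0 < s) :
    -(2 * B p q) ≤ s * B p p + B q q / s := by
  have hsquare := hnonneg (s • p + q)
  simp only [map_add, map_smul, add_apply, smul_apply, smul_eq_mul, hsymm q p] at hsquare
  have hdiv : s * B p p + B q q / s - -(2 * B p q) =
      (s * (s * B p p) + s * B p q + (s * B p q + B q q)) / s := by
    field_simp
    ring
  rw [← sub_nonneg, hdiv]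
  exact div_nonneg (by linarith) hs.le

variable {E : Type*} [NormedAddCommGroup E] [InnerProductSpace ℝ E] [CompleteSpace E]
  [MeasurableSpace E]

/-- Weak solutions `w` of the linear equation `div(B∇w) = 0` on the whole space, for a field `B` of
bilinear forms. Test functions of class `C¹` are allowed because they are built from `w` itself. -/
def IsWeakSolution (μ : Measure E) (B : E → E →L[ℝ] E →L[ℝ] ℝ) (w : E → ℝ) : Prop :=
  ∀ φ : E → ℝ, ContDiff ℝ 1 φ → HasCompactSupport φ → ∫ x, B x (∇ w x) (∇ φ x) ∂μ = 0

variable [BorelSpace E] {μ : Measure E} [IsFiniteMeasureOnCompacts μ]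
  {B : E → E →L[ℝ] E →L[ℝ] ℝ} {w η : E → ℝ}

theorem integrable_apply_gradient_mul (hB : Continuous B) (hη : ContDiff ℝ 1 η)
    (hηc : HasCompactSupport η) {ρ : E → ℝ} (hρ : Continuous ρ) :
    Integrable (fun x => B x (∇ η x) (∇ η x) * ρ x) μ := by
  have hη' := continuous_gradient hη
  refine Continuous.integrable_of_hasCompactSupport (by fun_prop) <|
    .intro hηc.isCompact fun x hx => ?_
  simp [gradient_of_notMem_tsupport hx]

theorem IsWeakSolution.integral_sq_mul_deriv_le (hweak : IsWeakSolution μ B w) (hB : Continuous B)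
    (hsymm : ∀ x p q, B x p q = B x q p) (hnonneg : ∀ x p, 0 ≤ B x p p) (hw : ContDiff ℝ 1 w)
    {g : ℝ → ℝ} (hg : ContDiff ℝ 1 g) (hg' : ∀ t, 0 < deriv g t) (hη : ContDiff ℝ 1 η)
    (hηc : HasCompactSupport η) :
    ∫ x, η x ^ 2 * B x (∇ w x) (∇ w x) * deriv g (w x) ∂μ ≤
      4 * ∫ x, B x (∇ η x) (∇ η x) * (g (w x) ^ 2 / deriv g (w x)) ∂μ := by
  have hdg : Continuous (deriv g) := hg.continuous_deriv_one
  have hw' := continuous_gradient hw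
  have hφ : ContDiff ℝ 1 fun x => η x ^ 2 * g (w x) := (hη.pow 2).mul (hg.comp hw)
  have hφ' := continuous_gradient hφ
  have hφc : HasCompactSupport fun x => η x ^ 2 * g (w x) :=
    .intro hηc.isCompact fun x hx => by simp [image_eq_zero_of_notMem_tsupport hx]
  have hleft : Integrable (fun x => η x ^ 2 * B x (∇ w x) (∇ w x) * deriv g (w x)) μ :=
    Continuous.integrable_of_hasCompactSupport (by fun_prop) <|
      .intro hηc.isCompact fun x hx => by simp [image_eq_zero_of_notMem_tsupport hx]
  have hright : Integrable (fun x => B x (∇ η x) (∇ η x) * (g (w x) ^ 2 / deriv g (w x))) μ :=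
    integrable_apply_gradient_mul hB hη hηc <|
      ((hg.continuous.comp hw.continuous).pow 2).div₀ (hdg.comp hw.continuous)
        fun x => (hg' (w x)).ne'
  have htest : Integrable (fun x => B x (∇ w x) (∇ (fun y => η y ^ 2 * g (w y)) x)) μ :=
    Continuous.integrable_of_hasCompactSupport (by fun_prop) <|
      .intro hφc.isCompact fun x hx => by rw [gradient_of_notMem_tsupport hx, map_zero]
  have hyoung (x : E) : 1 / 2 * (η x ^ 2 * B x (∇ w x) (∇ w x) * deriv g (w x)) -
      2 * (B x (∇ η x) (∇ η x) * (g (w x) ^ 2 / deriv g (w x))) ≤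
      B x (∇ w x) (∇ (fun y => η y ^ 2 * g (w y)) x) := by
    have h := neg_two_mul_apply_le_mul_add_div (B x) (hsymm x) (hnonneg x)
      (η x • ∇ w x) (g (w x) • ∇ η x) (half_pos (hg' (w x)))
    rw [gradient_sq_mul_comp (hη.differentiable one_ne_zero x)
      (hw.differentiable one_ne_zero x) (hg.differentiable one_ne_zero _)]
    simp only [map_add, map_smul, smul_apply, smul_eq_mul] at h ⊢
    linear_combination h
  have hmono := integral_mono ((hleft.const_mul (1 / 2)).sub (hright.const_mul 2)) htest hyoung
  rw [hweak _ hφ hφc, integral_sub' (hleft.const_mul _) (hright.const_mul _), integral_const_mul,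
    integral_const_mul] at hmono
  linarith

theorem abs_arsinh_le_log (t : ℝ) : |arsinh t| ≤ log (exp 1 ^ 2 - 1 + (1 + t ^ 2)) := by
  have hexp : (2 : ℝ) ≤ exp 1 := by linarith [add_one_le_exp (1 : ℝ)]
  have hsqrt : √(1 + t ^ 2) ≤ (2 + t ^ 2) / 2 := by
    rw [Real.sqrt_le_left (by positivity)]
    nlinarith [sq_nonneg (t ^ 2)]
  have hbound (s : ℝ) (hs : s ^ 2 = t ^ 2) : arsinh s ≤ log (exp 1 ^ 2 - 1 + (1 + t ^ 2)) := by
    rw [le_log_iff_exp_le (by nlinarith [sq_nonneg t]), exp_arsinh, hs]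
    nlinarith [sq_nonneg (s - 1)]
  exact abs_le'.2 ⟨hbound t rfl, by rw [← arsinh_neg]; exact hbound (-t) (neg_sq t)⟩

theorem IsWeakSolution.integral_sq_mul_inv_sqrt_le (hweak : IsWeakSolution μ B w)
    (hB : Continuous B) (hsymm : ∀ x p q, B x p q = B x q p) (hnonneg : ∀ x p, 0 ≤ B x p p)
    (hw : ContDiff ℝ 1 w) (hη : ContDiff ℝ 1 η) (hηc : HasCompactSupport η) :
    ∫ x, η x ^ 2 * B x (∇ w x) (∇ w x) * (√(1 + w x ^ 2))⁻¹ ∂μ ≤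
      4 * ∫ x, B x (∇ η x) (∇ η x) *
        (√(1 + w x ^ 2) * log (exp 1 ^ 2 - 1 + (1 + w x ^ 2)) ^ 2) ∂μ := by
  have hderiv : deriv arsinh = fun t => (√(1 + t ^ 2))⁻¹ :=
    funext fun t => (hasDerivAt_arsinh t).deriv
  have harsinh := hweak.integral_sq_mul_deriv_le hB hsymm hnonneg hw contDiff_arsinh
    (fun t => by rw [hderiv]; positivity) hη hηc
  simp only [hderiv, div_inv_eq_mul] at harsinh
  have hlog (x : E) : exp 1 ^ 2 - 1 + (1 + w x ^ 2) ≠ 0 := by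
    have hsum : exp 1 ^ 2 - 1 + (1 + w x ^ 2) = exp 1 ^ 2 + w x ^ 2 := by ring
    rw [hsum]
    positivity
  have hw0 := hw.continuous
  refine harsinh.trans (mul_le_mul_of_nonneg_left ?_ zero_le_four)
  refine integral_mono
    (integrable_apply_gradient_mul hB hη hηc ((hw0.arsinh.pow 2).mul (by fun_prop)))
    (integrable_apply_gradient_mul hB hη hηc (by fun_prop (disch := assumption))) fun x => ?_
  refine mul_le_mul_of_nonneg_left ?_ (hnonneg x _)
  rw [mul_comm]
  exact mul_le_mul_of_nonneg_left (sq_le_sq.2 ((abs_arsinh_le_log _).trans (le_abs_self _)))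
    (sqrt_nonneg _)

end Caccioppoli

section Euler

variable {E : Type*} [NormedAddCommGroup E] [InnerProductSpace ℝ E] [CompleteSpace E]
  [MeasurableSpace E] [BorelSpace E] {μ : Measure E} [μ.IsAddHaarMeasure]
  {ι : Type*} [Fintype ι] (b : OrthonormalBasis ι ℝ E) {f u : E → ℝ}

theorem isWeakSolution_fderiv_apply (hf : ContDiff ℝ 2 f) (hu : ContDiff ℝ 2 u)
    (hdiv : ∀ x, divergence b (fun y => fderiv ℝ f (∇ u y)) x = 0) (v : E) :
    IsWeakSolution μ (fun x => fderiv ℝ (fderiv ℝ f) (∇ u x)) (fderiv ℝ u · v) := by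
  intro φ hφ hφc
  have hf' : ContDiff ℝ 1 (fderiv ℝ f) := hf.fderiv_right (by norm_num)
  have hu' : ContDiff ℝ 1 (∇ u) := contDiff_gradient hu (by norm_num)
  have hchain (x : E) : fderiv ℝ (fun y => fderiv ℝ f (∇ u y)) x v =
      fderiv ℝ (fderiv ℝ f) (∇ u x) (∇ (fderiv ℝ u · v) x) := by
    rw [fderiv_fun_comp x (hf'.differentiable one_ne_zero _) (hu'.differentiable one_ne_zero x),
      ContinuousLinearMap.comp_apply, fderiv_gradient_apply hu.contDiffAt]
  simpa only [hchain] using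
    integral_fderiv_apply_gradient_eq_zero (μ := μ) b
    (A := fun y => fderiv ℝ f (∇ u y)) (hf'.comp hu') hdiv hφ hφc v

theorem statement11_general (hf : ContDiff ℝ 2 f)
    (hnonneg : ∀ p q, 0 ≤ iteratedFDeriv ℝ 2 f p ![q, q]) (hu : ContDiff ℝ 2 u)
    (hdiv : ∀ x, divergence b (fun y => fderiv ℝ f (∇ u y)) x = 0) (v : E) {η : E → ℝ}
    (hη : ContDiff ℝ 1 η) (hηc : HasCompactSupport η) {Ω : Set E} (hηΩ : tsupport η ⊆ Ω) :
    ∫ x in Ω, η x ^ 2 * iteratedFDeriv ℝ 2 f (∇ u x)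
          ![∇ (fderiv ℝ u · v) x, ∇ (fderiv ℝ u · v) x] *
        (1 + fderiv ℝ u x v ^ 2) ^ (-(1 : ℝ) / 2) ∂μ ≤
      4 * ∫ x in Ω, iteratedFDeriv ℝ 2 f (∇ u x) ![∇ η x, ∇ η x] *
        (1 + fderiv ℝ u x v ^ 2) ^ ((1 : ℝ) / 2) *
          log (exp 1 ^ 2 - 1 + (1 + fderiv ℝ u x v ^ 2)) ^ 2 ∂μ := by
  have hB : Continuous fun x => fderiv ℝ (fderiv ℝ f) (∇ u x) :=
    ((hf.fderiv_right (m := 1) (by norm_num)).continuous_fderiv one_ne_zero).comp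
      (contDiff_gradient (m := 1) hu (by norm_num)).continuous
  have hw : ContDiff ℝ 1 (fderiv ℝ u · v) :=
    (hu.fderiv_right (m := 1) (by norm_num)).clm_apply contDiff_const
  have hrpow (t : ℝ) : (1 + t ^ 2) ^ (-(1 : ℝ) / 2) = (√(1 + t ^ 2))⁻¹ := by
    rw [sqrt_eq_rpow, ← rpow_neg (by positivity), neg_div]
  simp only [iteratedFDeriv_two_apply, Matrix.cons_val_zero, Matrix.cons_val_one] at hnonneg
  simp only [iteratedFDeriv_two_apply, Matrix.cons_val_zero, Matrix.cons_val_one, hrpow,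
    ← sqrt_eq_rpow, mul_assoc (fderiv ℝ (fderiv ℝ f) _ (∇ η _) (∇ η _))]
  rw [setIntegral_eq_integral_of_forall_compl_eq_zero fun x hx => by
      simp [image_eq_zero_of_notMem_tsupport fun h => hx (hηΩ h)],
    setIntegral_eq_integral_of_forall_compl_eq_zero fun x hx => by
      simp [gradient_of_notMem_tsupport fun h => hx (hηΩ h)]]
  exact (isWeakSolution_fderiv_apply b hf hu hdiv v).integral_sq_mul_inv_sqrt_le hB
    (fun x => (hf.contDiffAt.isSymmSndFDerivAt (by simp)).eq) (fun x => hnonneg (∇ u x)) hw hη hηc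

end Euler

theorem Hess_nonneg {f : E2 → ℝ} (hpos : ∀ p q, q ≠ 0 → 0 < Hess f p q) (p q : E2) :
    0 ≤ Hess f p q := by
  rcases eq_or_ne q 0 with rfl | hq
  · simp [Hess, iteratedFDeriv_two_apply]
  · exact (hpos p q hq).le

theorem statement11 (f u : E2 → ℝ)
    (hf : ContDiff ℝ 2 f)
    (hpos : ∀ p q : E2, q ≠ 0 → 0 < Hess f p q)
    (hu : ContDiff ℝ 2 u) (heq : solves f u) :
    ∃ c : ℝ, 0 < c ∧ ∀ R : ℝ, 0 < R → ∀ η : E2 → ℝ,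
      ContDiff ℝ (⊤ : ℕ∞) η → HasCompactSupport η → tsupport η ⊆ ball (0 : E2) (2 * R) →
      (∀ x : E2, 0 ≤ η x) → (∀ x : E2, η x ≤ 1) →
      ∫ x in ball (0 : E2) (2 * R),
          (η x) ^ 2 * Hess f (gradient u x) (gradient (pd u 0) x) *
            (1 + (pd u 0 x) ^ 2) ^ (-(1:ℝ)/2)
        ≤ c * ∫ x in ball (0 : E2) (2 * R),
            Hess f (gradient u x) (gradient η x) * (1 + (pd u 0 x) ^ 2) ^ ((1:ℝ)/2) *
              (Real.log (Real.exp 1 ^ 2 - 1 + (1 + (pd u 0 x) ^ 2))) ^ 2 := by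
  refine ⟨4, four_pos, fun R _ η hη hηc hηR _ _ => ?_⟩
  exact statement11_general (EuclideanSpace.basisFun (Fin 2) ℝ) hf (Hess_nonneg hpos) hu
    (by simpa [divergence, solves, ee] using heq) (ee 0) (hη.of_le (mod_cast le_top)) hηc hηR
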